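/- For all complex numbers q and x with |q| < 1 and |x| < 1, one has Σ_{n=1}^∞ Σ_{c=0}^n (x;q)_n · x^{n−1} · q^{c²} · x^{2c} · [n choose c]_q = Σ_{n=0}^∞ χ₂₀⁽¹⁾(n) · q^{(n²−1)/40} · x^{(n−1)/2}, where on the right-hand side only n ≡ 1, 9, 11, 19 (mod 20) contribute, so that all exponents (n²−1)/40 and (n−1)/2 are nonnegative integers, and both series converge absolutely. -/

import Mathlib

/-- The finite q-Pochhammer symbol `(x;q)_n = ∏_{i=1}^n (1 - x q^{i-1})`. -/
noncomputable def qPoch (q x : ℂ) (n : ℕ) : ℂ := ∏ i ∈ Finset.range n, (1 - x * q ^ i)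

/-- The Gaussian binomial coefficient `[n choose c]_q`. -/
noncomputable def qBinom (q : ℂ) (n c : ℕ) : ℂ :=
  if c ≤ n then qPoch q q n / (qPoch q q c * qPoch q q (n - c)) else 0

/-- The 20-periodic function `χ₂₀⁽¹⁾`. -/
def chi20_1 (n : ℕ) : ℤ :=
  if n % 20 = 1 ∨ n % 20 = 19 then 1
  else if n % 20 = 9 ∨ n % 20 = 11 then -1
  else 0

lemma qPoch_succ (q x : ℂ) (n : ℕ) : qPoch q x (n + 1) = qPoch q x n * (1 - x * q ^ n) := by
  simp [qPoch, Finset.prod_range_succ]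

lemma qPoch_zero (q x : ℂ) : qPoch q x 0 = 1 := by simp [qPoch]

lemma one_sub_ne (q : ℂ) (hq : ‖q‖ < 1) (i : ℕ) : 1 - q * q ^ i ≠ 0 := by
  intro h
  have h1 : q ^ (i + 1) = 1 := by rw [pow_succ']; exact (sub_eq_zero.mp h).symm
  have h2 : ‖q‖ ^ (i + 1) = 1 := by rw [← norm_pow, h1, norm_one]
  have h3 : ‖q‖ ^ (i + 1) < 1 := pow_lt_one₀ (norm_nonneg _) hq (by omega)
  linarith

lemma qPoch_ne (q : ℂ) (hq : ‖q‖ < 1) (n : ℕ) : qPoch q q n ≠ 0 := by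
  unfold qPoch
  exact Finset.prod_ne_zero_iff.mpr fun i _ => one_sub_ne q hq i

lemma qBinom_zero (q : ℂ) (hq : ‖q‖ < 1) (n : ℕ) : qBinom q n 0 = 1 := by
  simp [qBinom, qPoch_zero, div_self (qPoch_ne q hq n)]

lemma qBinom_self (q : ℂ) (hq : ‖q‖ < 1) (n : ℕ) : qBinom q n n = 1 := by
  simp [qBinom, qPoch_zero, div_self (qPoch_ne q hq n)]

lemma qBinom_gt (q : ℂ) (n c : ℕ) (h : n < c) : qBinom q n c = 0 := by
  simp [qBinom, Nat.not_le.mpr h]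

lemma pascal1 (q : ℂ) (hq : ‖q‖ < 1) (n c : ℕ) :
    qBinom q (n + 1) (c + 1) = qBinom q n (c + 1) + q ^ (n - c) * qBinom q n c := by
  rcases lt_trichotomy c n with h | h | h
  · obtain ⟨d, rfl⟩ := Nat.exists_eq_add_of_lt h
    have e1 : c + d + 1 + 1 - (c + 1) = d + 1 := by omega
    have e2 : c + d + 1 - (c + 1) = d := by omega
    have e3 : c + d + 1 - c = d + 1 := by omega
    rw [qBinom, qBinom, qBinom, if_pos (by omega), if_pos (by omega), if_pos (by omega), e1, e2, e3,
      qPoch_succ q q (c + d + 1), qPoch_succ q q c, qPoch_succ q q d]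
    have h1 := qPoch_ne q hq c
    have h2 := qPoch_ne q hq d
    have h3 := one_sub_ne q hq c
    have h4 := one_sub_ne q hq d
    field_simp
    ring
  · subst h
    rw [qBinom_self q hq, qBinom_self q hq, qBinom_gt q c (c + 1) (by omega)]
    simp
  · rw [qBinom_gt q _ _ (by omega), qBinom_gt q _ _ (by omega), qBinom_gt q _ _ (by omega)]
    simp

lemma pascal2 (q : ℂ) (hq : ‖q‖ < 1) (n c : ℕ) :
    qBinom q (n + 1) (c + 1) = q ^ (c + 1) * qBinom q n (c + 1) + qBinom q n c := by
  rcases lt_trichotomy c n with h | h | h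
  · obtain ⟨d, rfl⟩ := Nat.exists_eq_add_of_lt h
    have e1 : c + d + 1 + 1 - (c + 1) = d + 1 := by omega
    have e2 : c + d + 1 - (c + 1) = d := by omega
    have e3 : c + d + 1 - c = d + 1 := by omega
    rw [qBinom, qBinom, qBinom, if_pos (by omega), if_pos (by omega), if_pos (by omega), e1, e2, e3,
      qPoch_succ q q (c + d + 1), qPoch_succ q q c, qPoch_succ q q d]
    have h1 := qPoch_ne q hq c
    have h2 := qPoch_ne q hq d
    have h3 := one_sub_ne q hq c
    have h4 := one_sub_ne q hq d
    field_simp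
    ring
  · subst h
    rw [qBinom_self q hq, qBinom_self q hq, qBinom_gt q c (c + 1) (by omega)]
    simp
  · rw [qBinom_gt q _ _ (by omega), qBinom_gt q _ _ (by omega), qBinom_gt q _ _ (by omega)]
    simp

/-- The inner polynomial. -/
noncomputable def FF (q : ℂ) (n : ℕ) (a : ℂ) : ℂ :=
  ∑ c ∈ Finset.range (n + 1), q ^ (c ^ 2) * a ^ c * qBinom q n c

lemma FF_ext (q : ℂ) (hq : ‖q‖ < 1) (n : ℕ) (a : ℂ) :
    FF q n a = (∑ c ∈ Finset.range (n + 1), q ^ ((c + 1) ^ 2) * a ^ (c + 1) * qBinom q n (c + 1))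
      + 1 := by
  have h : FF q n a = ∑ c ∈ Finset.range (n + 2), q ^ (c ^ 2) * a ^ c * qBinom q n c := by
    rw [Finset.sum_range_succ _ (n + 1), qBinom_gt q n (n + 1) (by omega), FF]; simp
  rw [h, Finset.sum_range_succ']
  simp [qBinom_zero q hq]

lemma FF_succ' (q : ℂ) (hq : ‖q‖ < 1) (n : ℕ) (a : ℂ) :
    FF q (n + 1) a =
      (∑ c ∈ Finset.range (n + 1), q ^ ((c + 1) ^ 2) * a ^ (c + 1) * qBinom q (n + 1) (c + 1))
      + 1 := by
  rw [FF, Finset.sum_range_succ']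
  simp [qBinom_zero q hq]

lemma FF_rec1 (q : ℂ) (hq : ‖q‖ < 1) (n : ℕ) (a : ℂ) :
    FF q (n + 1) a = FF q n a + a * q ^ (n + 1) * FF q n (a * q) := by
  rw [FF_succ' q hq, FF_ext q hq n a, FF, Finset.mul_sum, add_right_comm, ← Finset.sum_add_distrib]
  congr 1
  refine Finset.sum_congr rfl fun c hc => ?_
  have hc' : c ≤ n := by simpa [Nat.lt_succ_iff] using hc
  obtain ⟨d, rfl⟩ := Nat.exists_eq_add_of_le hc'
  rw [pascal1 q hq, Nat.add_sub_cancel_left]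
  ring

lemma FF_rec2 (q : ℂ) (hq : ‖q‖ < 1) (n : ℕ) (a : ℂ) :
    FF q (n + 1) a = FF q n (a * q) + a * q * FF q n (a * q ^ 2) := by
  rw [FF_succ' q hq, FF_ext q hq n (a * q), FF, Finset.mul_sum, add_right_comm,
    ← Finset.sum_add_distrib]
  congr 1
  refine Finset.sum_congr rfl fun c hc => ?_
  rw [pascal2 q hq]
  ring

lemma FF_zero (q : ℂ) (hq : ‖q‖ < 1) (a : ℂ) : FF q 0 a = 1 := by
  simp [FF, qBinom_zero q hq]

/-- The majorant product. -/
noncomputable def PP (r : ℝ) (n : ℕ) : ℝ := ∏ i ∈ Finset.range n, (1 + r ^ i)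

lemma PP_nonneg (r : ℝ) (hr : 0 ≤ r) (n : ℕ) : 0 ≤ PP r n :=
  Finset.prod_nonneg fun i _ => by positivity

lemma PP_bound (r : ℝ) (hr : 0 ≤ r) (hr1 : r < 1) (n : ℕ) : PP r n ≤ Real.exp ((1 - r)⁻¹) := by
  calc PP r n ≤ ∏ i ∈ Finset.range n, Real.exp (r ^ i) := by
        refine Finset.prod_le_prod (fun i _ => by positivity) fun i _ => ?_
        rw [add_comm]; exact Real.add_one_le_exp _
    _ = Real.exp (∑ i ∈ Finset.range n, r ^ i) := (Real.exp_sum _ _).symm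
    _ ≤ _ := by
        apply Real.exp_le_exp.mpr
        rw [← tsum_geometric_of_lt_one hr hr1]
        exact (summable_geometric_of_lt_one hr hr1).sum_le_tsum _ fun i _ => by positivity

lemma qPoch_bound (q x : ℂ) (hx : ‖x‖ ≤ 1) (n : ℕ) : ‖qPoch q x n‖ ≤ PP ‖q‖ n := by
  rw [qPoch, norm_prod]
  refine Finset.prod_le_prod (fun i _ => norm_nonneg _) fun i _ => ?_
  calc ‖1 - x * q ^ i‖ ≤ ‖(1 : ℂ)‖ + ‖x * q ^ i‖ := norm_sub_le _ _
    _ ≤ 1 + ‖q‖ ^ i := by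
      rw [norm_one, norm_mul, norm_pow]
      have := mul_le_mul_of_nonneg_right hx (pow_nonneg (norm_nonneg q) i)
      linarith

lemma FF_bound (q : ℂ) (hq : ‖q‖ < 1) (n : ℕ) : ∀ a : ℂ, ‖a‖ ≤ 1 → ‖FF q n a‖ ≤ PP ‖q‖ n := by
  induction n with
  | zero => intro a _; simp [FF_zero q hq, PP]
  | succ n ih =>
    intro a ha
    have h1 := ih a ha
    have h2 := ih (a * q) (by
      rw [norm_mul]; exact mul_le_one₀ ha (norm_nonneg _) hq.le)
    have hP := PP_nonneg ‖q‖ (norm_nonneg _) n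
    have h3 : ‖a * q ^ (n + 1)‖ ≤ ‖q‖ ^ n := by
      rw [norm_mul, norm_pow]
      calc ‖a‖ * ‖q‖ ^ (n + 1) ≤ 1 * ‖q‖ ^ (n + 1) := by gcongr
        _ = ‖q‖ ^ (n + 1) := one_mul _
        _ ≤ ‖q‖ ^ n := pow_le_pow_of_le_one (norm_nonneg _) hq.le (by omega)
    rw [FF_rec1 q hq]
    calc _ ≤ ‖FF q n a‖ + ‖a * q ^ (n + 1)‖ * ‖FF q n (a * q)‖ := by
          rw [← norm_mul]; exact norm_add_le _ _
      _ ≤ PP ‖q‖ n + ‖q‖ ^ n * PP ‖q‖ n := by gcongr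
      _ = PP ‖q‖ (n + 1) := by rw [PP, PP, Finset.prod_range_succ]; ring

/-- The terms of the extended series. -/
noncomputable def sT (q x : ℂ) (n : ℕ) : ℂ := qPoch q x n * x ^ n * FF q n (x ^ 2)

/-- The terms of the left side. -/
noncomputable def lT (q x : ℂ) (n : ℕ) : ℂ := qPoch q x (n + 1) * x ^ n * FF q (n + 1) (x ^ 2)

/-- The terms of the right side. -/
noncomputable def tT (q x : ℂ) (n : ℕ) : ℂ :=
  (chi20_1 n : ℂ) * q ^ ((n ^ 2 - 1) / 40) * x ^ ((n - 1) / 2)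

lemma PF_bound (q x : ℂ) (hq : ‖q‖ < 1) (hx : ‖x‖ < 1) (n : ℕ) :
    ‖qPoch q x n * FF q n (x ^ 2)‖ ≤ Real.exp ((1 - ‖q‖)⁻¹) ^ 2 := by
  have hx2 : ‖x ^ 2‖ ≤ 1 := by rw [norm_pow]; exact pow_le_one₀ (norm_nonneg _) hx.le
  rw [norm_mul, sq (Real.exp _)]
  have h := PP_bound ‖q‖ (norm_nonneg _) hq n
  exact mul_le_mul ((qPoch_bound q x hx.le n).trans h) ((FF_bound q hq n _ hx2).trans h)
    (norm_nonneg _) (Real.exp_pos _).le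

lemma sT_bound (q x : ℂ) (hq : ‖q‖ < 1) (hx : ‖x‖ < 1) (n : ℕ) :
    ‖sT q x n‖ ≤ Real.exp ((1 - ‖q‖)⁻¹) ^ 2 * ‖x‖ ^ n := by
  have : sT q x n = (qPoch q x n * FF q n (x ^ 2)) * x ^ n := by rw [sT]; ring
  rw [this, norm_mul, norm_pow]
  gcongr
  exact PF_bound q x hq hx n

lemma lT_bound (q x : ℂ) (hq : ‖q‖ < 1) (hx : ‖x‖ < 1) (n : ℕ) :
    ‖lT q x n‖ ≤ Real.exp ((1 - ‖q‖)⁻¹) ^ 2 * ‖x‖ ^ n := by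
  have : lT q x n = (qPoch q x (n + 1) * FF q (n + 1) (x ^ 2)) * x ^ n := by rw [lT]; ring
  rw [this, norm_mul, norm_pow]
  gcongr
  exact PF_bound q x hq hx (n + 1)

lemma geo_summable (K r : ℝ) (hr : 0 ≤ r) (hr1 : r < 1) : Summable fun n : ℕ => K * r ^ n :=
  (summable_geometric_of_lt_one hr hr1).mul_left K

lemma sT_summable (q x : ℂ) (hq : ‖q‖ < 1) (hx : ‖x‖ < 1) : Summable (sT q x) :=
  Summable.of_norm_bounded (geo_summable _ _ (norm_nonneg x) hx) (sT_bound q x hq hx)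

lemma lT_summable (q x : ℂ) (hq : ‖q‖ < 1) (hx : ‖x‖ < 1) : Summable (lT q x) :=
  Summable.of_norm_bounded (geo_summable _ _ (norm_nonneg x) hx) (lT_bound q x hq hx)

lemma qPoch_shift (q x : ℂ) (n : ℕ) : (1 - x) * qPoch q (x * q) n = qPoch q x (n + 1) := by
  rw [qPoch, qPoch, Finset.prod_range_succ', mul_comm]
  simp only [pow_zero, mul_one]
  congr 1
  refine Finset.prod_congr rfl fun i _ => ?_
  ring

lemma norm_mul_lt (q x : ℂ) (hq : ‖q‖ < 1) (hx : ‖x‖ < 1) : ‖x * q‖ < 1 := by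
  rw [norm_mul]
  exact mul_lt_one_of_nonneg_of_lt_one_left (norm_nonneg _) hx hq.le

lemma cert (q x : ℂ) (hq : ‖q‖ < 1) (n : ℕ) :
    (1 - x) * (sT q x n + x ^ 5 * q ^ 2 * sT q (x * q) n)
      = sT q x n * (1 - x ^ 2 * q ^ n) - sT q x (n + 1) * (1 - x ^ 2 * q ^ (n + 1)) := by
  have r1 := FF_rec1 q hq n (x ^ 2)
  have r2 := FF_rec2 q hq n (x ^ 2)
  have r3 := qPoch_shift q x n
  have r4 := qPoch_succ q x n
  have e : (x * q) ^ 2 = x ^ 2 * q ^ 2 := by ring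
  simp only [sT, e]
  have h5 : (1 - x) * (qPoch q x n * x ^ n * FF q n (x ^ 2) +
      x ^ 5 * q ^ 2 * (qPoch q (x * q) n * (x * q) ^ n * FF q n (x ^ 2 * q ^ 2)))
      = (1 - x) * (qPoch q x n * x ^ n * FF q n (x ^ 2)) +
       x ^ 3 * q * (x * q) ^ n * ((1 - x) * qPoch q (x * q) n) *
        (x ^ 2 * q * FF q n (x ^ 2 * q ^ 2)) := by ring
  have h6 : x ^ 2 * q * FF q n (x ^ 2 * q ^ 2) = FF q n (x ^ 2) +
      x ^ 2 * q ^ (n + 1) * FF q n (x ^ 2 * q) - FF q n (x ^ 2 * q) := by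
    rw [← r1, r2]; ring
  rw [h5, h6, r3, r4, r1]
  ring

lemma S_rec (q x : ℂ) (hq : ‖q‖ < 1) (hx : ‖x‖ < 1) :
    ∑' n, sT q x n = 1 + x - x ^ 5 * q ^ 2 * ∑' n, sT q (x * q) n := by
  have hx1 : 1 - x ≠ 0 := by
    intro h
    rw [← sub_eq_zero.mp h] at hx
    simp at hx
  have s1 := sT_summable q x hq hx
  have s2 := sT_summable q (x * q) hq (norm_mul_lt q x hq hx)
  have s3 : Summable fun n => sT q x n * (1 - x ^ 2 * q ^ n) := by
    refine Summable.of_norm_bounded (g := fun n => 2 * ‖sT q x n‖) (s1.norm.mul_left 2) fun n => ?_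
    rw [norm_mul, mul_comm]
    gcongr
    calc ‖1 - x ^ 2 * q ^ n‖ ≤ ‖(1 : ℂ)‖ + ‖x ^ 2 * q ^ n‖ := norm_sub_le _ _
      _ ≤ 1 + 1 := by
        rw [norm_one, norm_mul, norm_pow, norm_pow]
        gcongr
        exact mul_le_one₀ (pow_le_one₀ (norm_nonneg _) hx.le) (by positivity)
          (pow_le_one₀ (norm_nonneg _) hq.le)
      _ = 2 := by norm_num
  have s4 := (summable_nat_add_iff 1).mpr s3
  have key : (1 - x) * (∑' n, sT q x n + x ^ 5 * q ^ 2 * ∑' n, sT q (x * q) n) = 1 - x ^ 2 := by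
    rw [← tsum_mul_left, ← s1.tsum_add (s2.mul_left _), ← tsum_mul_left]
    simp_rw [cert q x hq]
    rw [s3.tsum_sub s4, s3.tsum_eq_zero_add]
    simp [sT, qPoch_zero, FF_zero q hq]
  have : ∑' n, sT q x n + x ^ 5 * q ^ 2 * ∑' n, sT q (x * q) n = 1 + x := by
    apply mul_left_cancel₀ hx1
    rw [key]; ring
  linear_combination this

lemma S_eq (q x : ℂ) (hq : ‖q‖ < 1) (hx : ‖x‖ < 1) :
    ∑' n, sT q x n = 1 + x * ∑' n, lT q x n := by
  rw [(sT_summable q x hq hx).tsum_eq_zero_add, ← tsum_mul_left]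
  congr 1
  · simp [sT, qPoch_zero, FF_zero q hq]
  · refine tsum_congr fun n => ?_
    simp only [sT, lT]; ring

lemma tT_shift (q x : ℂ) (n : ℕ) : tT q x (n + 10) = -(q ^ 3 * x ^ 5) * tT q (x * q) n := by
  have hn : n = 20 * (n / 20) + n % 20 := by omega
  have hlt : n % 20 < 20 := Nat.mod_lt _ (by norm_num)
  generalize n / 20 = k at hn
  generalize n % 20 = r at hn hlt
  have hmain : ∀ r e d m : ℕ, r = 2 * d + 1 → r ^ 2 = 40 * e + 1 → 
      (20 * k + r) ^ 2 - 1 = 40 * (10 * k ^ 2 + k * r + e) ∧ (20 * k + r - 1) / 2 = 10 * k + d ∧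
      (20 * k + r + 10) ^ 2 - 1 = 40 * (10 * k ^ 2 + k * r + e + 10 * k + d + 3) ∧
      (20 * k + r + 10 - 1) / 2 = 10 * k + d + 5 := by
    intro r e d m h1 h2
    refine ⟨?_, by omega, ?_, by omega⟩
    · have : (20 * k + r) ^ 2 = 40 * (10 * k ^ 2 + k * r + e) + 1 := by
        linear_combination h2
      omega
    · have : (20 * k + r + 10) ^ 2 = 40 * (10 * k ^ 2 + k * r + e + 10 * k + d + 3) + 1 := by
        linear_combination h2 + 20 * h1
      omega
  have hfin : ∀ e d : ℕ, r = 2 * d + 1 → r ^ 2 = 40 * e + 1 → chi20_1 (n + 10) = - chi20_1 n →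
      tT q x (n + 10) = -(q ^ 3 * x ^ 5) * tT q (x * q) n := by
    intro e d h1 h2 h3
    obtain ⟨a1, a2, a3, a4⟩ := hmain r e d 0 h1 h2
    rw [tT, tT, h3, hn, a1, a2, a3, a4, Nat.mul_div_cancel_left _ (by norm_num),
      Nat.mul_div_cancel_left _ (by norm_num)]
    push_cast
    ring
  by_cases h1 : r = 1
  · exact hfin 0 0 (by omega) (by subst h1; norm_num) (by unfold chi20_1; split_ifs <;> first | rfl | omega)
  by_cases h9 : r = 9
  · exact hfin 2 4 (by omega) (by subst h9; norm_num) (by unfold chi20_1; split_ifs <;> first | rfl | omega)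
  by_cases h11 : r = 11
  · exact hfin 3 5 (by omega) (by subst h11; norm_num) (by unfold chi20_1; split_ifs <;> first | rfl | omega)
  by_cases h19 : r = 19
  · exact hfin 9 9 (by omega) (by subst h19; norm_num) (by unfold chi20_1; split_ifs <;> first | rfl | omega)
  have z1 : chi20_1 n = 0 := by unfold chi20_1; split_ifs <;> first | rfl | omega
  have z2 : chi20_1 (n + 10) = 0 := by unfold chi20_1; split_ifs <;> first | rfl | omega
  simp [tT, z1, z2]

lemma chi_bound (n : ℕ) : ‖(chi20_1 n : ℂ)‖ ≤ 1 := by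
  unfold chi20_1
  split_ifs <;> simp

lemma tT_bound (q x : ℂ) (hq : ‖q‖ < 1) (n : ℕ) : ‖tT q x n‖ ≤ ‖x‖ ^ ((n - 1) / 2) := by
  rw [tT, norm_mul, norm_mul, norm_pow, norm_pow]
  have h2 : ‖q‖ ^ ((n ^ 2 - 1) / 40) ≤ 1 := pow_le_one₀ (norm_nonneg _) hq.le
  have := mul_le_one₀ (chi_bound n) (by positivity) h2
  exact mul_le_of_le_one_left (by positivity) this

lemma half_summable (r : ℝ) (hr : 0 ≤ r) (hr1 : r < 1) :
    Summable fun n : ℕ => r ^ ((n - 1) / 2) := by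
  rw [← summable_nat_add_iff 2]
  have hs : Real.sqrt r < 1 := by rw [Real.sqrt_lt' one_pos]; simpa using hr1
  refine Summable.of_nonneg_of_le (fun n => by positivity) (fun n => ?_)
    (summable_geometric_of_lt_one (Real.sqrt_nonneg r) hs)
  calc r ^ ((n + 2 - 1) / 2) = (Real.sqrt r ^ 2) ^ ((n + 2 - 1) / 2) := by rw [Real.sq_sqrt hr]
    _ = Real.sqrt r ^ (2 * ((n + 2 - 1) / 2)) := (pow_mul _ _ _).symm
    _ ≤ _ := pow_le_pow_of_le_one (Real.sqrt_nonneg r) hs.le (by omega)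

lemma tT_summable (q x : ℂ) (hq : ‖q‖ < 1) (hx : ‖x‖ < 1) : Summable (tT q x) :=
  Summable.of_norm_bounded (half_summable _ (norm_nonneg x) hx) (tT_bound q x hq)

lemma T_rec (q x : ℂ) (hq : ‖q‖ < 1) (hx : ‖x‖ < 1) :
    ∑' n, tT q x n = 1 - q ^ 2 * x ^ 4 - q ^ 3 * x ^ 5 * ∑' n, tT q (x * q) n := by
  rw [← (tT_summable q x hq hx).sum_add_tsum_nat_add 10]
  simp_rw [tT_shift]
  rw [tsum_mul_left]
  simp [Finset.sum_range_succ, tT, chi20_1]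
  ring

/-- The difference of both sides, times `x`. -/
noncomputable def EE (q x : ℂ) : ℂ := x * (∑' n, lT q x n - ∑' n, tT q x n)

lemma EE_rec (q x : ℂ) (hq : ‖q‖ < 1) (hx : ‖x‖ < 1) :
    EE q x = -(x ^ 5 * q ^ 2) * EE q (x * q) := by
  have h1 := S_rec q x hq hx
  have h4 := T_rec q x hq hx
  rw [S_eq q x hq hx, S_eq q (x * q) hq (norm_mul_lt q x hq hx)] at h1
  rw [EE, EE]
  linear_combination h1 - x * h4

lemma EE_bound (q x : ℂ) (hq : ‖q‖ < 1) (r : ℝ) (hxr : ‖x‖ ≤ r) (hr : r < 1) :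
    ‖EE q x‖ ≤ (∑' n : ℕ, Real.exp ((1 - ‖q‖)⁻¹) ^ 2 * r ^ n) + ∑' n : ℕ, r ^ ((n - 1) / 2) := by
  have hx : ‖x‖ < 1 := hxr.trans_lt hr
  have hr0 : 0 ≤ r := (norm_nonneg x).trans hxr
  rw [EE, norm_mul]
  refine (mul_le_of_le_one_left (norm_nonneg _) hx.le).trans ((norm_sub_le _ _).trans ?_)
  refine add_le_add ?_ ?_
  · refine tsum_of_norm_bounded (geo_summable _ r hr0 hr).hasSum fun n => ?_
    refine (lT_bound q x hq hx n).trans ?_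
    gcongr
  · refine tsum_of_norm_bounded (half_summable r hr0 hr).hasSum fun n => ?_
    refine (tT_bound q x hq n).trans ?_
    gcongr

lemma EE_iter (q : ℂ) (hq : ‖q‖ < 1) (r M : ℝ) (hr : r < 1)
    (hM : ∀ y : ℂ, ‖y‖ ≤ r → ‖EE q y‖ ≤ M) (k : ℕ) :
    ∀ y : ℂ, ‖y‖ ≤ r → ‖EE q y‖ ≤ ‖q‖ ^ k * M := by
  induction k with
  | zero => simpa using hM
  | succ k ih =>
    intro y hy
    have hy1 : ‖y‖ < 1 := hy.trans_lt hr
    have h1 := ih (y * q) (by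
      rw [norm_mul]; exact (mul_le_of_le_one_right (norm_nonneg _) hq.le).trans hy)
    rw [EE_rec q y hq hy1, norm_mul, norm_neg, norm_mul, norm_pow, norm_pow]
    have h2 : ‖y‖ ^ 5 * ‖q‖ ^ 2 ≤ ‖q‖ := by
      calc ‖y‖ ^ 5 * ‖q‖ ^ 2 ≤ 1 * ‖q‖ ^ 1 := by
            refine mul_le_mul (pow_le_one₀ (norm_nonneg _) hy1.le)
              (pow_le_pow_of_le_one (norm_nonneg _) hq.le (by norm_num)) (by positivity) one_pos.le
        _ = ‖q‖ := by ring
    calc _ ≤ ‖q‖ * (‖q‖ ^ k * M) := mul_le_mul h2 h1 (norm_nonneg _) (norm_nonneg _)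
      _ = _ := by ring

lemma EE_zero (q x : ℂ) (hq : ‖q‖ < 1) (hx : ‖x‖ < 1) : EE q x = 0 := by
  have h := fun k => EE_iter q hq ‖x‖ _ hx (fun y hy => EE_bound q y hq ‖x‖ hy hx) k x le_rfl
  have ht := (tendsto_pow_atTop_nhds_zero_of_lt_one (norm_nonneg q) hq).mul_const
    ((∑' n : ℕ, Real.exp ((1 - ‖q‖)⁻¹) ^ 2 * ‖x‖ ^ n) + ∑' n : ℕ, ‖x‖ ^ ((n - 1) / 2))
  rw [zero_mul] at ht
  exact norm_le_zero_iff.mp (ge_of_tendsto' ht h)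

lemma main_eq (q x : ℂ) (hq : ‖q‖ < 1) (hx : ‖x‖ < 1) : ∑' n, lT q x n = ∑' n, tT q x n := by
  by_cases h0 : x = 0
  · subst h0
    rw [T_rec q 0 hq hx, tsum_eq_single 0]
    · simp [lT, FF_rec1 q hq, FF_zero q hq, qPoch]
    · intro n hn
      simp [lT, hn]
  · have := EE_zero q x hq hx
    rw [EE, mul_eq_zero] at this
    exact sub_eq_zero.mp (this.resolve_left h0)

lemma lT_eq (q x : ℂ) : (fun n : ℕ => ∑ c ∈ Finset.range (n + 2),
      qPoch q x (n + 1) * x ^ n * q ^ (c ^ 2) * x ^ (2 * c) * qBinom q (n + 1) c) = lT q x := by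
  funext n
  rw [lT, FF, Finset.mul_sum]
  refine Finset.sum_congr rfl fun c _ => ?_
  rw [pow_mul]; ring

theorem stmt_3 (q x : ℂ) (hq : ‖q‖ < 1) (hx : ‖x‖ < 1) :
    Summable (fun n : ℕ => ∑ c ∈ Finset.range (n + 2),
      qPoch q x (n + 1) * x ^ n * q ^ (c ^ 2) * x ^ (2 * c) * qBinom q (n + 1) c) ∧
    Summable (fun n : ℕ =>
      (chi20_1 n : ℂ) * q ^ ((n ^ 2 - 1) / 40) * x ^ ((n - 1) / 2)) ∧
    ∑' n : ℕ, ∑ c ∈ Finset.range (n + 2),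
        qPoch q x (n + 1) * x ^ n * q ^ (c ^ 2) * x ^ (2 * c) * qBinom q (n + 1) c
      = ∑' n : ℕ, (chi20_1 n : ℂ) * q ^ ((n ^ 2 - 1) / 40) * x ^ ((n - 1) / 2) := by
  rw [lT_eq]
  exact ⟨lT_summable q x hq hx, tT_summable q x hq hx, main_eq q x hq hx⟩
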